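/- arXiv:1403.0446 — 3 statements merged into one kernel-verified Lean document; each statement's English description precedes it below -/
import Mathlib

section
/- Let z₁, z₂, z₃ be nonzero complex numbers with z₁z₂z₃ = 1 and let n₁ ≥ n₂ ≥ n₃ ≥ 1 be integers with n₂ + n₃ > n₁ + 1. For j = 1, 2, 3 set A_j = ℂ[t^{±1}]/((t − z_j)^{n_j}), and let V = (A₁ ⊗_ℂ A₂ ⊗_ℂ A₃)/H. Then n₂n₃ − (n₂ + n₃ − n₁)(n₂ + n₃ − n₁ − 1)/2 ≤ dim_ℂ V ≤ n₂n₃. -/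
open LaurentPolynomial TensorProduct

set_option synthInstance.maxHeartbeats 1000000
set_option maxHeartbeats 1000000
noncomputable section

abbrev LQuot (K : Type) [Field K] (p : LaurentPolynomial K) : Type :=
  LaurentPolynomial K ⧸ Ideal.span {p}

/-- The class of a Laurent polynomial in the quotient by `(p)`. -/
def clsOf (K : Type) [Field K] (p x : LaurentPolynomial K) : LQuot K p :=
  Ideal.Quotient.mk (Ideal.span {p}) x

abbrev Trip (K : Type) [Field K] (p q r : LaurentPolynomial K) : Type :=
  (LQuot K p ⊗[K] LQuot K q) ⊗[K] LQuot K r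

/-- The holonomy subspace: the `K`-span of the elements
`β₁ ⊗ β₂ ⊗ β₃ - tβ₁ ⊗ tβ₂ ⊗ tβ₃`. -/
def holSub (K : Type) [Field K] (p q r : LaurentPolynomial K) :
    Submodule K (Trip K p q r) :=
  Submodule.span K { x | ∃ (a : LQuot K p) (b : LQuot K q) (c : LQuot K r),
    x = (a ⊗ₜ[K] b) ⊗ₜ[K] c -
      (((T 1 : LaurentPolynomial K) • a) ⊗ₜ[K] ((T 1 : LaurentPolynomial K) • b)) ⊗ₜ[K]
        ((T 1 : LaurentPolynomial K) • c) }

instance (K : Type) [Field K] (p q r : LaurentPolynomial K) : AddCommGroup (Trip K p q r) :=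
  TensorProduct.addCommGroup


/-- The algebra map out of the quotient determined by a unit killed by `(t - z)^n`. -/
lemma exists_lift (W : Type) [CommRing W] [Algebra ℂ W] (z : ℂ) (n : ℕ) (u : Wˣ)
    (hu : ((u : W) - algebraMap ℂ W z) ^ n = 0) :
    ∃ f : LQuot ℂ ((T 1 - C z) ^ n) →ₐ[ℂ] W, ∀ x : LaurentPolynomial ℂ,
      f (Ideal.Quotient.mk _ x) = eval₂ (algebraMap ℂ W) u x := by
  let g : LaurentPolynomial ℂ →ₐ[ℂ] W :=
    { eval₂ (algebraMap ℂ W) u with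
      commutes' := fun r => by
        have := eval₂_C (algebraMap ℂ W) u r
        exact this }
  have hg : ∀ x, g x = eval₂ (algebraMap ℂ W) u x := fun x => rfl
  refine ⟨Ideal.Quotient.liftₐ _ g ?_, fun x => ?_⟩
  · intro a ha
    rw [Ideal.mem_span_singleton] at ha
    obtain ⟨c, rfl⟩ := ha
    rw [hg, map_mul, map_pow, map_sub, eval₂_T, eval₂_C, zpow_one, hu, zero_mul]
  · rfl

lemma lower_aux (W : Type) [CommRing W] [Algebra ℂ W] (z₁ z₂ z₃ : ℂ) (n₁ n₂ n₃ : ℕ)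
    (u₁ u₂ u₃ : Wˣ) (h₁ : ((u₁ : W) - algebraMap ℂ W z₁) ^ n₁ = 0)
    (h₂ : ((u₂ : W) - algebraMap ℂ W z₂) ^ n₂ = 0)
    (h₃ : ((u₃ : W) - algebraMap ℂ W z₃) ^ n₃ = 0)
    (hu : (u₁ : W) * u₂ * u₃ = 1)
    (hadj : Algebra.adjoin ℂ {(u₂ : W), (u₃ : W)} = ⊤) :
    Module.rank ℂ W ≤ Module.rank ℂ
          (Trip ℂ ((T 1 - C z₁) ^ n₁) ((T 1 - C z₂) ^ n₂) ((T 1 - C z₃) ^ n₃) ⧸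
            holSub ℂ ((T 1 - C z₁) ^ n₁) ((T 1 - C z₂) ^ n₂) ((T 1 - C z₃) ^ n₃)) := by
  obtain ⟨f₁, hf₁⟩ := exists_lift W z₁ n₁ u₁ h₁
  obtain ⟨f₂, hf₂⟩ := exists_lift W z₂ n₂ u₂ h₂
  obtain ⟨f₃, hf₃⟩ := exists_lift W z₃ n₃ u₃ h₃
  let F := Algebra.TensorProduct.productMap (Algebra.TensorProduct.productMap f₁ f₂) f₃
  have hF : ∀ a b c, F ((a ⊗ₜ[ℂ] b) ⊗ₜ[ℂ] c) = f₁ a * f₂ b * f₃ c := by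
    intro a b c
    simp [F]
  have hsurj : Function.Surjective F := by
    rw [← AlgHom.range_eq_top, eq_top_iff, ← hadj, Algebra.adjoin_le_iff]
    rintro x (rfl | rfl)
    · refine ⟨(1 ⊗ₜ[ℂ] (Ideal.Quotient.mk _ (T 1))) ⊗ₜ[ℂ] 1, ?_⟩
      exact (hF _ _ _).trans (by rw [map_one, map_one, hf₂]; simp)
    · refine ⟨(1 ⊗ₜ[ℂ] 1) ⊗ₜ[ℂ] (Ideal.Quotient.mk _ (T 1)), ?_⟩
      exact (hF _ _ _).trans (by rw [map_one, map_one, hf₃]; simp)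
  have hsm : ∀ (p : LaurentPolynomial ℂ) (a : LQuot ℂ p),
      (T 1 : LaurentPolynomial ℂ) • a = Ideal.Quotient.mk _ (T 1) * a := by
    intro p a
    obtain ⟨x, rfl⟩ := Ideal.Quotient.mk_surjective a
    rfl
  have hker : holSub ℂ ((T 1 - C z₁) ^ n₁) ((T 1 - C z₂) ^ n₂) ((T 1 - C z₃) ^ n₃) ≤
      LinearMap.ker F.toLinearMap := by
    unfold holSub
    rw [Submodule.span_le]
    rintro x ⟨a, b, c, rfl⟩
    rw [SetLike.mem_coe, LinearMap.mem_ker, map_sub, sub_eq_zero]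
    refine (hF _ _ _).trans (Eq.trans ?_ (hF _ _ _).symm)
    rw [hsm, hsm, hsm, map_mul, map_mul, map_mul, hf₁, hf₂, hf₃]
    simp only [eval₂_T, zpow_one]
    linear_combination (-(f₁ a * f₂ b * f₃ c)) * hu
  refine LinearMap.rank_le_of_surjective (Submodule.liftQ _ F.toLinearMap hker) ?_
  intro w
  obtain ⟨x, rfl⟩ := hsurj w
  exact ⟨Submodule.Quotient.mk x, rfl⟩

lemma rank_LQuot_le (z : ℂ) (hz : z ≠ 0) (n : ℕ) :
    Module.rank ℂ (LQuot ℂ ((T 1 - C z) ^ n)) ≤ n := by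
  let g : Polynomial ℂ →ₐ[ℂ] LQuot ℂ ((T 1 - C z) ^ n) :=
    (Ideal.Quotient.mkₐ ℂ _).comp Polynomial.toLaurentAlg
  have hgX : g Polynomial.X = Ideal.Quotient.mk _ (T 1) := by
    simp [g]
  have hgp : g ((Polynomial.X - Polynomial.C z) ^ n) = 0 := by
    simp only [g, AlgHom.comp_apply, Polynomial.toLaurentAlg_apply, map_pow, map_sub,
      Polynomial.toLaurent_X, Polynomial.toLaurent_C]
    rw [← map_sub, ← map_pow]
    exact Ideal.Quotient.eq_zero_iff_mem.2 (Ideal.mem_span_singleton_self _)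
  have hcop : IsCoprime (Polynomial.X : Polynomial ℂ) ((Polynomial.X - Polynomial.C z) ^ n) := by
    apply IsCoprime.pow_right
    have := Polynomial.isCoprime_X_sub_C_of_isUnit_sub (R := ℂ) (a := 0) (b := z)
      (by simpa using hz)
    simpa using this
  obtain ⟨a, b, hab⟩ := hcop
  have hinv : g a * Ideal.Quotient.mk _ (T 1) = 1 := by
    have := congrArg g hab
    rw [map_add, map_mul, map_mul, hgp, mul_zero, add_zero, hgX, map_one] at this
    exact this
  have hga : g a = Ideal.Quotient.mk _ (T (-1)) := by
    have h1 : (Ideal.Quotient.mk (Ideal.span {(T 1 - C z) ^ n}) (T 1)) *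
        Ideal.Quotient.mk _ (T (-1)) = 1 := by
      rw [← map_mul, ← T_add]; simp
    calc g a = g a * (Ideal.Quotient.mk _ (T 1) * Ideal.Quotient.mk _ (T (-1))) := by
          rw [h1, mul_one]
      _ = _ := by rw [← mul_assoc, hinv, one_mul]
  have hsurj : Function.Surjective g := by
    intro y
    obtain ⟨x, rfl⟩ := Ideal.Quotient.mk_surjective y
    obtain ⟨m, f, hf⟩ := exists_T_pow x
    refine ⟨f * a ^ m, ?_⟩
    rw [map_mul, map_pow, hga]
    change Ideal.Quotient.mk _ (Polynomial.toLaurent f) * _ = _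
    rw [hf, ← map_pow, ← map_mul, mul_assoc, T_pow, ← T_add]
    simp
  have hmonic : ((Polynomial.X - Polynomial.C z) ^ n).Monic := (Polynomial.monic_X_sub_C z).pow n
  let G : AdjoinRoot ((Polynomial.X - Polynomial.C z) ^ n) →ₐ[ℂ] LQuot ℂ ((T 1 - C z) ^ n) :=
    Ideal.Quotient.liftₐ _ g (by
      intro a ha
      rw [Ideal.mem_span_singleton] at ha
      obtain ⟨c, rfl⟩ := ha
      rw [map_mul, hgp, zero_mul])
  have hG : Function.Surjective G.toLinearMap := by
    intro y
    obtain ⟨x, rfl⟩ := hsurj y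
    exact ⟨Ideal.Quotient.mk _ x, rfl⟩
  refine (LinearMap.rank_le_of_surjective G.toLinearMap hG).trans ?_
  have : Module.Finite ℂ (AdjoinRoot ((Polynomial.X - Polynomial.C z) ^ n)) := hmonic.finite_adjoinRoot
  rw [← Module.finrank_eq_rank, (AdjoinRoot.powerBasis' hmonic).finrank]
  simp

lemma upper_aux (p q r : LaurentPolynomial ℂ) :
    Module.rank ℂ (Trip ℂ p q r ⧸ holSub ℂ p q r) ≤
      Module.rank ℂ (LQuot ℂ q) * Module.rank ℂ (LQuot ℂ r) := by
  let π := (holSub ℂ p q r).mkQ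
  let L : (LQuot ℂ q ⊗[ℂ] LQuot ℂ r) →ₗ[ℂ] (Trip ℂ p q r ⧸ holSub ℂ p q r) :=
    π ∘ₗ (TensorProduct.assoc ℂ (LQuot ℂ p) (LQuot ℂ q) (LQuot ℂ r)).symm.toLinearMap ∘ₗ
      (TensorProduct.mk ℂ (LQuot ℂ p) (LQuot ℂ q ⊗[ℂ] LQuot ℂ r) 1)
  have hL : ∀ b c, L (b ⊗ₜ c) = π ((1 ⊗ₜ b) ⊗ₜ c) := fun b c => rfl
  have hrel : ∀ a b c, π ((a ⊗ₜ[ℂ] b) ⊗ₜ[ℂ] c) =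
      π ((((T 1 : LaurentPolynomial ℂ) • a) ⊗ₜ[ℂ] ((T 1 : LaurentPolynomial ℂ) • b)) ⊗ₜ[ℂ]
        ((T 1 : LaurentPolynomial ℂ) • c)) := by
    intro a b c
    refine (Submodule.Quotient.eq _).2 (Submodule.subset_span ⟨a, b, c, rfl⟩)
  have hT : ∀ (m : ℤ) (s : LaurentPolynomial ℂ) (x : LQuot ℂ s),
      (T 1 : LaurentPolynomial ℂ) • (T m : LaurentPolynomial ℂ) • x
        = (T (m + 1) : LaurentPolynomial ℂ) • x := by
    intro m s x
    rw [smul_smul, ← T_add, add_comm]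
  have hmem : ∀ (m : ℤ) b c, π ((((T m : LaurentPolynomial ℂ) • (1 : LQuot ℂ p)) ⊗ₜ[ℂ] b) ⊗ₜ[ℂ] c)
      ∈ LinearMap.range L := by
    intro m
    induction m using Int.induction_on with
    | zero =>
      intro b c
      refine ⟨b ⊗ₜ c, ?_⟩
      rw [hL, T_zero, one_smul]
    | succ m ih =>
      intro b c
      have := ih ((T (-1) : LaurentPolynomial ℂ) • b) ((T (-1) : LaurentPolynomial ℂ) • c)
      rw [hrel, hT, hT, hT] at this
      simpa using this
    | pred m ih =>
      intro b c
      have := ih ((T 1 : LaurentPolynomial ℂ) • b) ((T 1 : LaurentPolynomial ℂ) • c)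
      rw [hrel, hT]
      simpa using this
  have hmem2 : ∀ (a : LQuot ℂ p) b c, π ((a ⊗ₜ[ℂ] b) ⊗ₜ[ℂ] c) ∈ LinearMap.range L := by
    intro a b c
    obtain ⟨x, rfl⟩ := Ideal.Quotient.mk_surjective a
    induction x using LaurentPolynomial.induction_on' with
    | add x y hx hy =>
      rw [map_add, TensorProduct.add_tmul, TensorProduct.add_tmul, map_add]
      exact add_mem hx hy
    | C_mul_T m z =>
      have h : (Ideal.Quotient.mk (Ideal.span {p}) (C z * T m) : LQuot ℂ p)
          = z • ((T m : LaurentPolynomial ℂ) • (1 : LQuot ℂ p)) := by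
        rw [← smul_eq_C_mul]
        change _ = z • Ideal.Quotient.mk (Ideal.span {p}) (T m * 1)
        rw [mul_one]
        rfl
      rw [h, ← TensorProduct.smul_tmul', ← TensorProduct.smul_tmul', map_smul]
      exact Submodule.smul_mem _ _ (hmem m b c)
  have hsurj : Function.Surjective L := by
    rw [← LinearMap.range_eq_top, eq_top_iff]
    rintro y -
    obtain ⟨x, rfl⟩ := Submodule.mkQ_surjective _ y
    change π x ∈ _
    induction x using TensorProduct.induction_on with
    | zero => rw [map_zero]; exact zero_mem _
    | add x y hx hy => rw [map_add]; exact add_mem hx hy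
    | tmul x c =>
      induction x using TensorProduct.induction_on with
      | zero => rw [TensorProduct.zero_tmul, map_zero]; exact zero_mem _
      | add x y hx hy => rw [TensorProduct.add_tmul, map_add]; exact add_mem hx hy
      | tmul a b => exact hmem2 a b c
  refine (LinearMap.rank_le_of_surjective L hsurj).trans ?_
  rw [rank_tensorProduct']

/-- The ideal of polynomials in two variables whose coefficients in a box below the
`n₁`-th antidiagonal vanish. -/
def boxIdeal (n₁ n₂ n₃ : ℕ) : Ideal (MvPolynomial (Fin 2) ℂ) where
  carrier := {f | ∀ m : Fin 2 →₀ ℕ, m 0 < n₂ → m 1 < n₃ → m 0 + m 1 < n₁ → f.coeff m = 0}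
  zero_mem' := fun m _ _ _ => by simp
  add_mem' := fun {a b} ha hb m h0 h1 h2 => by
    rw [MvPolynomial.coeff_add, ha m h0 h1 h2, hb m h0 h1 h2, add_zero]
  smul_mem' := fun c f hf m h0 h1 h2 => by
    classical
    rw [smul_eq_mul, MvPolynomial.coeff_mul]
    refine Finset.sum_eq_zero fun x hx => ?_
    rw [Finset.HasAntidiagonal.mem_antidiagonal] at hx
    have e0 : x.1 0 + x.2 0 = m 0 := by rw [← hx]; rfl
    have e1 : x.1 1 + x.2 1 = m 1 := by rw [← hx]; rfl
    rw [hf x.2 (by omega) (by omega) (by omega), mul_zero]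

/-- The index set of a monomial basis of the quotient. -/
def boxSet (n₁ n₂ n₃ : ℕ) : Finset (ℕ × ℕ) :=
  (Finset.range n₂ ×ˢ Finset.range n₃).filter (fun x => x.1 + x.2 < n₁)

lemma boxSet_card (n₁ n₂ n₃ : ℕ) (hn₂₃ : n₃ ≤ n₂)
    (hn₁₂ : n₂ ≤ n₁) (hbig : n₁ + 1 < n₂ + n₃) :
    n₂ * n₃ - (n₂ + n₃ - n₁) * (n₂ + n₃ - n₁ - 1) / 2 ≤ (boxSet n₁ n₂ n₃).card := by
  have h := Finset.card_filter_add_card_filter_not (s := Finset.range n₂ ×ˢ Finset.range n₃)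
    (fun x => x.1 + x.2 < n₁)
  rw [Finset.card_product, Finset.card_range, Finset.card_range] at h
  have h2 : ((Finset.range n₂ ×ˢ Finset.range n₃).filter (fun x => ¬ x.1 + x.2 < n₁)).card
      ≤ (n₂ + n₃ - n₁) * (n₂ + n₃ - n₁ - 1) / 2 := by
    have hs : ((Finset.range (n₂ + n₃ - n₁)).sigma Finset.range).card =
        (n₂ + n₃ - n₁) * (n₂ + n₃ - n₁ - 1) / 2 := by
      rw [Finset.card_sigma, ← Finset.sum_range_id]
      simp only [Finset.card_range]
    rw [← hs]
    refine Finset.card_le_card_of_injOn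
      (fun x => ⟨n₂ + n₃ - 1 - x.1 - x.2, n₂ - 1 - x.1⟩) ?_ ?_
    · rintro ⟨i, j⟩ hx
      simp only [Finset.coe_filter, Finset.mem_product, Finset.mem_range, Set.mem_setOf_eq] at hx
      simp only [Finset.coe_sigma, Set.mem_sigma_iff, Finset.coe_range, Set.mem_Iio]
      omega
    · rintro ⟨i, j⟩ hx ⟨i', j'⟩ hx' hh
      simp only [Finset.coe_filter, Finset.mem_product, Finset.mem_range, Set.mem_setOf_eq] at hx hx'
      simp only [Sigma.mk.injEq, heq_eq_eq] at hh
      ext <;> simp only <;> omega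
  unfold boxSet
  omega

/-- The exponent attached to a pair of naturals. -/
def expo (x : ℕ × ℕ) : Fin 2 →₀ ℕ := Finsupp.equivFunOnFinite.symm ![x.1, x.2]

lemma expo_zero (x : ℕ × ℕ) : expo x 0 = x.1 := rfl
lemma expo_one (x : ℕ × ℕ) : expo x 1 = x.2 := rfl
lemma expo_inj {x y : ℕ × ℕ} (h : expo x = expo y) : x = y := by
  ext
  · rw [← expo_zero, h, expo_zero]
  · rw [← expo_one, h, expo_one]

lemma rank_box (n₁ n₂ n₃ : ℕ) :
    ((boxSet n₁ n₂ n₃).card : Cardinal) ≤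
      Module.rank ℂ (MvPolynomial (Fin 2) ℂ ⧸ boxIdeal n₁ n₂ n₃) := by
  classical
  have hli : LinearIndependent ℂ (fun x : boxSet n₁ n₂ n₃ =>
      Ideal.Quotient.mkₐ ℂ (boxIdeal n₁ n₂ n₃) (MvPolynomial.monomial (expo x.1) 1)) := by
    rw [Fintype.linearIndependent_iff]
    intro g hg x
    simp only [← map_smul, ← map_sum] at hg
    have hg' := Ideal.Quotient.eq_zero_iff_mem.1 hg
    have hx := x.2
    simp only [boxSet, Finset.mem_filter, Finset.mem_product, Finset.mem_range] at hx
    have := hg' (expo x.1) hx.1.1 hx.1.2 hx.2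
    rw [MvPolynomial.coeff_sum, Finset.sum_eq_single x] at this
    · simpa using this
    · intro y _ hy
      rw [MvPolynomial.coeff_monomial, if_neg]
      exact fun h => hy (Subtype.ext (expo_inj h))
    · simp
  have := hli.cardinal_le_rank
  simpa using this

lemma pow_mem_box0 (n₁ n₂ n₃ : ℕ) : (MvPolynomial.X 0 : MvPolynomial (Fin 2) ℂ) ^ n₂ ∈
    boxIdeal n₁ n₂ n₃ := by
  classical
  intro m h0 _ _
  rw [MvPolynomial.coeff_X_pow, if_neg]
  rintro rfl
  simp at h0

lemma pow_mem_box1 (n₁ n₂ n₃ : ℕ) : (MvPolynomial.X 1 : MvPolynomial (Fin 2) ℂ) ^ n₃ ∈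
    boxIdeal n₁ n₂ n₃ := by
  classical
  intro m _ h0 _
  rw [MvPolynomial.coeff_X_pow, if_neg]
  rintro rfl
  simp at h0

lemma mix_mem_box (n₁ n₂ n₃ i j : ℕ) (h : n₁ ≤ i + j) :
    (MvPolynomial.X 0 : MvPolynomial (Fin 2) ℂ) ^ i * MvPolynomial.X 1 ^ j ∈
    boxIdeal n₁ n₂ n₃ := by
  classical
  intro m _ _ h2
  rw [MvPolynomial.X_pow_eq_monomial, MvPolynomial.X_pow_eq_monomial, MvPolynomial.monomial_mul,
    MvPolynomial.coeff_monomial, if_neg]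
  rintro rfl
  simp at h2
  omega

lemma u_mem_box (n₁ n₂ n₃ : ℕ) :
    (MvPolynomial.X 0 + MvPolynomial.X 1 * (1 + MvPolynomial.X 0) :
      MvPolynomial (Fin 2) ℂ) ^ n₁ ∈ boxIdeal n₁ n₂ n₃ := by
  rw [add_pow]
  refine Ideal.sum_mem _ fun i hi => ?_
  rw [Finset.mem_range] at hi
  rw [mul_pow]
  have := Ideal.mul_mem_right ((1 + MvPolynomial.X 0) ^ (n₁ - i) * ((n₁.choose i : ℕ) :
    MvPolynomial (Fin 2) ℂ)) _ (mix_mem_box n₁ n₂ n₃ i (n₁ - i) (by omega))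
  convert this using 1
  ring

lemma lower_bound (z₁ z₂ z₃ : ℂ) (hz₂ : z₂ ≠ 0) (hz₃ : z₃ ≠ 0)
    (hprod : z₁ * z₂ * z₃ = 1) (n₁ n₂ n₃ : ℕ) :
    ((boxSet n₁ n₂ n₃).card : Cardinal) ≤ Module.rank ℂ
          (Trip ℂ ((T 1 - C z₁) ^ n₁) ((T 1 - C z₂) ^ n₂) ((T 1 - C z₃) ^ n₃) ⧸
            holSub ℂ ((T 1 - C z₁) ^ n₁) ((T 1 - C z₂) ^ n₂) ((T 1 - C z₃) ^ n₃)) := by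
  refine (rank_box n₁ n₂ n₃).trans ?_
  let W := MvPolynomial (Fin 2) ℂ ⧸ boxIdeal n₁ n₂ n₃
  let π : MvPolynomial (Fin 2) ℂ →ₐ[ℂ] W := Ideal.Quotient.mkₐ ℂ (boxIdeal n₁ n₂ n₃)
  have hπ : ∀ f ∈ boxIdeal n₁ n₂ n₃, π f = 0 := fun f hf => Ideal.Quotient.eq_zero_iff_mem.2 hf
  obtain ⟨x, hx⟩ : ∃ x, x = π (MvPolynomial.X 0) := ⟨_, rfl⟩
  obtain ⟨y, hy⟩ : ∃ y, y = π (MvPolynomial.X 1) := ⟨_, rfl⟩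
  have hxn : x ^ n₂ = 0 := by rw [hx, ← map_pow]; exact hπ _ (pow_mem_box0 _ _ _)
  have hyn : y ^ n₃ = 0 := by rw [hy, ← map_pow]; exact hπ _ (pow_mem_box1 _ _ _)
  have hun : (x + y * (1 + x)) ^ n₁ = 0 := by
    have := hπ _ (u_mem_box n₁ n₂ n₃)
    simpa [hx, hy] using this
  have hxu : IsUnit (1 + x) := IsNilpotent.isUnit_one_add ⟨_, hxn⟩
  have hyu : IsUnit (1 + y) := IsNilpotent.isUnit_one_add ⟨_, hyn⟩
  obtain ⟨a, ha⟩ := (hz₂.isUnit.map (algebraMap ℂ W)).mul hxu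
  obtain ⟨b, hb⟩ := (hz₃.isUnit.map (algebraMap ℂ W)).mul hyu
  have hp : algebraMap ℂ W z₁ * algebraMap ℂ W z₂ * algebraMap ℂ W z₃ = 1 := by
    rw [← map_mul, ← map_mul, hprod, map_one]
  have hab : ((a * b)⁻¹ : Wˣ) * ((a : W) * b) = 1 := by
    rw [← Units.val_mul, Units.inv_mul]
  refine lower_aux W z₁ z₂ z₃ n₁ n₂ n₃ (a * b)⁻¹ a b ?_ ?_ ?_ ?_ ?_
  · have : (((a * b)⁻¹ : Wˣ) : W) - algebraMap ℂ W z₁ =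
        (-(((a * b)⁻¹ : Wˣ) : W)) * (x + y * (1 + x)) := by
      have e : algebraMap ℂ W z₁ * ((a : W) * b) = (1 + x) * (1 + y) := by
        rw [ha, hb]
        linear_combination (1 + x) * (1 + y) * hp
      linear_combination (algebraMap ℂ W z₁) * hab - ((a * b)⁻¹ : Wˣ).val * e
    rw [this, mul_pow, hun, mul_zero]
  · rw [ha, show algebraMap ℂ W z₂ * (1 + x) - algebraMap ℂ W z₂ = algebraMap ℂ W z₂ * x by ring,
      mul_pow, hxn, mul_zero]
  · rw [hb, show algebraMap ℂ W z₃ * (1 + y) - algebraMap ℂ W z₃ = algebraMap ℂ W z₃ * y by ring,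
      mul_pow, hyn, mul_zero]
  · rw [mul_assoc, hab]
  · set A := Algebra.adjoin ℂ {(a : W), (b : W)} with hA
    have haA : (a : W) ∈ A := Algebra.subset_adjoin (by simp)
    have hbA : (b : W) ∈ A := Algebra.subset_adjoin (by simp)
    have hi : ∀ z : ℂ, z ≠ 0 → algebraMap ℂ W z⁻¹ * algebraMap ℂ W z = 1 := by
      intro z hz
      rw [← map_mul, inv_mul_cancel₀ hz, map_one]
    have hxA : x ∈ A := by
      have : x = algebraMap ℂ W z₂⁻¹ * a - 1 := by
        rw [ha]; linear_combination (-(1 + x)) * hi z₂ hz₂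
      rw [this]
      exact sub_mem (mul_mem (A.algebraMap_mem _) haA) (one_mem _)
    have hyA : y ∈ A := by
      have : y = algebraMap ℂ W z₃⁻¹ * b - 1 := by
        rw [hb]; linear_combination (-(1 + y)) * hi z₃ hz₃
      rw [this]
      exact sub_mem (mul_mem (A.algebraMap_mem _) hbA) (one_mem _)
    rw [eq_top_iff]
    rintro w -
    obtain ⟨f, rfl⟩ := Ideal.Quotient.mk_surjective w
    change π f ∈ A
    have : Algebra.adjoin ℂ (Set.range (MvPolynomial.X : Fin 2 → MvPolynomial (Fin 2) ℂ)) ≤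
        A.comap π := by
      rw [Algebra.adjoin_le_iff]
      rintro _ ⟨i, rfl⟩
      fin_cases i
      · change π (MvPolynomial.X 0) ∈ A
        rwa [← hx]
      · change π (MvPolynomial.X 1) ∈ A
        rwa [← hy]
    rw [MvPolynomial.adjoin_range_X] at this
    exact this (Algebra.mem_top : f ∈ ⊤)

theorem stmt9 (z₁ z₂ z₃ : ℂ) (hz₁ : z₁ ≠ 0) (hz₂ : z₂ ≠ 0) (hz₃ : z₃ ≠ 0)
    (hprod : z₁ * z₂ * z₃ = 1) (n₁ n₂ n₃ : ℕ) (hn₃ : 1 ≤ n₃) (hn₂₃ : n₃ ≤ n₂)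
    (hn₁₂ : n₂ ≤ n₁) (hbig : n₁ + 1 < n₂ + n₃) :
    ((n₂ * n₃ - (n₂ + n₃ - n₁) * (n₂ + n₃ - n₁ - 1) / 2 : ℕ) : Cardinal) ≤
        Module.rank ℂ
          (Trip ℂ ((T 1 - C z₁) ^ n₁) ((T 1 - C z₂) ^ n₂) ((T 1 - C z₃) ^ n₃) ⧸
            holSub ℂ ((T 1 - C z₁) ^ n₁) ((T 1 - C z₂) ^ n₂) ((T 1 - C z₃) ^ n₃)) ∧
      Module.rank ℂ
          (Trip ℂ ((T 1 - C z₁) ^ n₁) ((T 1 - C z₂) ^ n₂) ((T 1 - C z₃) ^ n₃) ⧸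
            holSub ℂ ((T 1 - C z₁) ^ n₁) ((T 1 - C z₂) ^ n₂) ((T 1 - C z₃) ^ n₃)) ≤
        ((n₂ * n₃ : ℕ) : Cardinal) := by
  refine ⟨?_, ?_⟩
  · refine le_trans ?_ (lower_bound z₁ z₂ z₃ hz₂ hz₃ hprod n₁ n₂ n₃)
    exact_mod_cast boxSet_card n₁ n₂ n₃ hn₂₃ hn₁₂ hbig
  · refine (upper_aux _ _ _).trans ?_
    rw [Nat.cast_mul]
    exact mul_le_mul' (rank_LQuot_le z₂ hz₂ n₂) (rank_LQuot_le z₃ hz₃ n₃)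
end
end

section
/- Let R = ℚ[t₁^{±1}, t₂^{±1}, t₃^{±1}] be the Laurent polynomial ring in three variables over ℚ (equivalently, the group algebra of ℤ³ over ℚ), on which the symmetric group S₃ acts by ℚ-algebra automorphisms permuting the variables t₁, t₂, t₃. Let R^a = {P ∈ R : σ·P = ε(σ)P for all σ ∈ S₃}, where ε denotes the signature, and let R^s ⊆ R be the ℚ-linear span of all P ∈ R such that τ·P = P for some transposition τ ∈ S₃. Then R is the internal direct sum R = R^s ⊕ R^a, i.e. R^s ∩ R^a = 0 and R^s + R^a = R. -/
open LaurentPolynomial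

set_option synthInstance.maxHeartbeats 1000000
set_option maxHeartbeats 1000000
noncomputable section

/-- The Laurent polynomial ring in three variables over `ℚ`, realized as the monoid algebra
of the additive group `ℤ³`. -/
abbrev R3 : Type := AddMonoidAlgebra ℚ (Fin 3 → ℤ)

/-- The additive automorphism of `ℤ³` permuting the coordinates according to `σ`. -/
def permAddEquiv (σ : Equiv.Perm (Fin 3)) : (Fin 3 → ℤ) ≃+ (Fin 3 → ℤ) :=
  { Equiv.arrowCongr σ (Equiv.refl ℤ) with map_add' := fun _ _ => rfl }

/-- The action of `σ ∈ S₃` on `R3`, permuting the three variables. -/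
def permAct (σ : Equiv.Perm (Fin 3)) : R3 ≃ₐ[ℚ] R3 :=
  AddMonoidAlgebra.domCongr ℚ ℚ (permAddEquiv σ)

/-- The antisymmetric part `R^a`: the subspace of elements `P` with `σ·P = ε(σ)P` for all
`σ ∈ S₃`. -/
def Ra : Submodule ℚ R3 :=
  ⨅ σ : Equiv.Perm (Fin 3),
    LinearMap.ker ((permAct σ).toLinearMap - (Equiv.Perm.sign σ : ℤ) • LinearMap.id)

/-- The subspace `R^s`: the span of the elements fixed by some transposition. -/
def Rs : Submodule ℚ R3 :=
  Submodule.span ℚ { P : R3 | ∃ τ : Equiv.Perm (Fin 3), τ.IsSwap ∧ permAct τ P = P }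

theorem permAct_mul (σ τ : Equiv.Perm (Fin 3)) (P : R3) :
    permAct (σ * τ) P = permAct σ (permAct τ P) := by
  have h : ((permAct (σ * τ)).toLinearMap : R3 →ₗ[ℚ] R3)
      = (permAct σ).toLinearMap ∘ₗ (permAct τ).toLinearMap := by
    ext a : 2
    simp [permAct]
    rfl
  exact LinearMap.congr_fun h P

theorem permAct_one (P : R3) : permAct 1 P = P := by
  have h := permAct_mul 1 1 P
  rw [mul_one] at h
  exact ((permAct 1).injective h).symm

theorem mem_Ra_iff (P : R3) :
    P ∈ Ra ↔ ∀ σ : Equiv.Perm (Fin 3), permAct σ P = (Equiv.Perm.sign σ : ℤ) • P := by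
  simp [Ra, Submodule.mem_iInf, LinearMap.mem_ker, sub_eq_zero]

/-- Antisymmetrizer. -/
def antiSym : R3 →ₗ[ℚ] R3 :=
  ∑ σ : Equiv.Perm (Fin 3), (Equiv.Perm.sign σ : ℤ) • (permAct σ).toLinearMap

theorem antiSym_apply (P : R3) :
    antiSym P = ∑ σ : Equiv.Perm (Fin 3), (Equiv.Perm.sign σ : ℤ) • permAct σ P := by
  simp [antiSym, LinearMap.sum_apply]

theorem antiSym_permAct (τ : Equiv.Perm (Fin 3)) (P : R3) :
    antiSym (permAct τ P) = (Equiv.Perm.sign τ : ℤ) • antiSym P := by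
  rw [antiSym_apply, antiSym_apply, Finset.smul_sum]
  refine Fintype.sum_equiv (Equiv.mulRight τ) _ _ fun σ => ?_
  rw [Equiv.coe_mulRight, permAct_mul, smul_smul, Equiv.Perm.sign_mul]
  congr 1
  rcases Int.units_eq_one_or (Equiv.Perm.sign τ) with h | h <;> simp [h]

theorem permAct_antiSym (τ : Equiv.Perm (Fin 3)) (P : R3) :
    permAct τ (antiSym P) = (Equiv.Perm.sign τ : ℤ) • antiSym P := by
  rw [antiSym_apply, map_sum, Finset.smul_sum]
  refine Fintype.sum_equiv (Equiv.mulLeft τ) _ _ fun σ => ?_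
  rw [Equiv.coe_mulLeft, permAct_mul, smul_smul, Equiv.Perm.sign_mul, map_zsmul]
  congr 1
  rcases Int.units_eq_one_or (Equiv.Perm.sign τ) with h | h <;> simp [h]

theorem antiSym_of_mem_Rs (P : R3) (hP : P ∈ Rs) : antiSym P = 0 := by
  have : Rs ≤ LinearMap.ker antiSym := by
    refine Submodule.span_le.2 ?_
    rintro Q ⟨τ, hτ, hQ⟩
    have h := antiSym_permAct τ Q
    rw [hQ, hτ.sign_eq] at h
    have h2 : antiSym Q = - antiSym Q := by simpa using h
    have h3 : (2 : ℚ) • antiSym Q = 0 := by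
      rw [two_smul]
      exact add_eq_zero_iff_eq_neg.2 h2
    exact (smul_eq_zero.1 h3).resolve_left (by norm_num)
  exact this hP

theorem antiSym_of_mem_Ra (P : R3) (hP : P ∈ Ra) : antiSym P = (6 : ℚ) • P := by
  rw [mem_Ra_iff] at hP
  rw [antiSym_apply, Finset.sum_congr rfl (g := fun _ => P)]
  · rw [Finset.sum_const, Finset.card_univ, Fintype.card_perm, Fintype.card_fin,
      ← Nat.cast_smul_eq_nsmul ℚ]
    norm_num [Nat.factorial]
  · intro σ _
    rw [hP σ, smul_smul]
    rcases Int.units_eq_one_or (Equiv.Perm.sign σ) with h | h <;> simp [h]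

theorem sub_mem_Rs (P : R3) (σ : Equiv.Perm (Fin 3)) :
    P - (Equiv.Perm.sign σ : ℤ) • permAct σ P ∈ Rs := by
  induction σ using Equiv.Perm.swap_induction_on with
  | one => simp [permAct_one]
  | swap_mul f x y hxy ih =>
    have h1 : permAct f P + permAct (Equiv.swap x y) (permAct f P) ∈ Rs := by
      refine Submodule.subset_span ⟨Equiv.swap x y, ⟨x, y, hxy, rfl⟩, ?_⟩
      rw [map_add, ← permAct_mul (Equiv.swap x y) (Equiv.swap x y), Equiv.swap_mul_self,
        permAct_one, add_comm]
    have h2 := Rs.add_mem ih (zsmul_mem h1 (Equiv.Perm.sign f : ℤ))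
    convert h2 using 1
    rw [permAct_mul, Equiv.Perm.sign_mul, Equiv.Perm.sign_swap hxy]
    rcases Int.units_eq_one_or (Equiv.Perm.sign f) with h | h <;> simp [h] <;> abel

theorem stmt11 : Rs ⊓ Ra = ⊥ ∧ Rs ⊔ Ra = ⊤ := by
  constructor
  · rw [eq_bot_iff]
    rintro P ⟨h1, h2⟩
    have h := antiSym_of_mem_Ra P h2
    rw [antiSym_of_mem_Rs P h1] at h
    exact (smul_eq_zero.1 h.symm).resolve_left (by norm_num)
  · rw [eq_top_iff]
    intro P _
    have h1 : (6 : ℚ) • P - antiSym P ∈ Rs := by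
      have h := Submodule.sum_mem Rs (t := Finset.univ) fun σ _ => sub_mem_Rs P σ
      rw [Finset.sum_sub_distrib, ← antiSym_apply, Finset.sum_const, Finset.card_univ,
        Fintype.card_perm, Fintype.card_fin, ← Nat.cast_smul_eq_nsmul ℚ] at h
      norm_num [Nat.factorial] at h
      exact h
    have h2 : antiSym P ∈ Ra := (mem_Ra_iff _).2 fun σ => permAct_antiSym σ P
    have h3 : (6 : ℚ) • P ∈ Rs ⊔ Ra := by
      have := Submodule.add_mem_sup h1 h2
      rwa [sub_add_cancel] at this
    exact (Submodule.smul_mem_iff _ (by norm_num)).1 h3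
end
end

section
/- Let 𝔄 = ℚ[t^{±1}]/(t⁴ + 1) ⊕ ℚ[t^{±1}]/(t² + 1). Then dim_ℚ ℋ(𝔄) = 2. -/
open LaurentPolynomial TensorProduct

set_option synthInstance.maxHeartbeats 1000000
set_option maxHeartbeats 1000000
noncomputable section

/-- The wedge `a ∧ b ∧ c` as an element of the third exterior power. -/
def wedge3 (K : Type) [Field K] (M : Type) [AddCommGroup M] [Module K M] (a b c : M) :
    ⋀[K]^3 M :=
  ⟨ExteriorAlgebra.ιMulti K 3 ![a, b, c],
    ExteriorAlgebra.ιMulti_range K 3 (Set.mem_range_self _)⟩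

/-- The holonomy subspace of the third exterior power: the `K`-span of the elements
`β₁ ∧ β₂ ∧ β₃ - tβ₁ ∧ tβ₂ ∧ tβ₃`. -/
def wedgeHol (K : Type) [Field K] (M : Type) [AddCommGroup M]
    [Module (LaurentPolynomial K) M] [Module K M]
    [IsScalarTower K (LaurentPolynomial K) M] :
    Submodule K ↥(⋀[K]^3 M) :=
  Submodule.span K { x | ∃ a b c : M,
    x = wedge3 K M a b c -
      wedge3 K M ((T 1 : LaurentPolynomial K) • a) ((T 1 : LaurentPolynomial K) • b)
        ((T 1 : LaurentPolynomial K) • c) }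

/-- `ℋ(M)`: the quotient of the third exterior power by the holonomy subspace. -/
abbrev Hcal (K : Type) [Field K] (M : Type) [AddCommGroup M]
    [Module (LaurentPolynomial K) M] [Module K M]
    [IsScalarTower K (LaurentPolynomial K) M] : Type :=
  ↥(⋀[K]^3 M) ⧸ wedgeHol K M

/-- The module `𝔄 = ℚ[t^{±1}]/(t⁴+1) ⊕ ℚ[t^{±1}]/(t²+1)`. -/
abbrev Amod : Type := LQuot ℚ (T 4 + 1) × LQuot ℚ (T 2 + 1)

/-- shifted antiperiodic functional -/
def Lfun (d : ℤ) (c : ℤ → ℚ) (hc : ∀ n, c (n + d) = - c n) :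
    LQuot ℚ (T d + 1) →ₗ[ℚ] ℚ :=
  Submodule.liftQ ((Ideal.span {(T d + 1 : LaurentPolynomial ℚ)}).restrictScalars ℚ)
    (Finsupp.linearCombination ℚ c ∘ₗ (AddMonoidAlgebra.coeffLinearEquiv ℚ).toLinearMap) (by
      intro x hx
      obtain ⟨q, rfl⟩ := Ideal.mem_span_singleton'.1 hx
      clear hx
      rw [LinearMap.mem_ker]
      induction q using LaurentPolynomial.induction_on' with
      | add p q hp hq => rw [add_mul, map_add, hp, hq, add_zero]
      | C_mul_T n a =>
        rw [mul_add, mul_one, mul_assoc, ← T_add, ← single_eq_C_mul_T, ← single_eq_C_mul_T]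
        simp only [LinearMap.comp_apply, map_add, LinearEquiv.coe_coe,
          AddMonoidAlgebra.coeffLinearEquiv_apply, AddMonoidAlgebra.coeff_single,
          Finsupp.linearCombination_single, hc]
        simp)

abbrev tt : LaurentPolynomial ℚ := T 1

def ek (d : ℤ) (n : ℤ) : LQuot ℚ (T d + 1) := Ideal.Quotient.mk _ (T n)

lemma Lfun_ek (d c hc n) : Lfun d c hc (ek d n) = c n := by
  have : Lfun d c hc (ek d n) = (Finsupp.linearCombination ℚ c ∘ₗ (AddMonoidAlgebra.coeffLinearEquiv ℚ).toLinearMap) (T n) := rfl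
  rw [this]
  simp only [T, LinearMap.comp_apply, LinearEquiv.coe_coe,
          AddMonoidAlgebra.coeffLinearEquiv_apply, AddMonoidAlgebra.coeff_single,
          Finsupp.linearCombination_single, one_smul]

lemma tt_ek (d n) : tt • ek d n = ek d (n+1) := by
  rw [add_comm n, ek, ek, T_add]; rfl

lemma ek_add (d n) : ek d (n+d) = - ek d n := by
  rw [eq_neg_iff_add_eq_zero, ek, ek, ← map_add, Ideal.Quotient.eq_zero_iff_mem,
    Ideal.mem_span_singleton, T_add]
  exact ⟨T n, by ring⟩

lemma ek_ind {d : ℤ} {P : LQuot ℚ (T d + 1) → Prop} (h : ∀ n, P (ek d n))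
    (ha : ∀ x y, P x → P y → P (x+y)) (hs : ∀ (r : ℚ) x, P x → P (r • x)) (x) : P x := by
  obtain ⟨q, rfl⟩ := Ideal.Quotient.mk_surjective x
  induction q using LaurentPolynomial.induction_on' with
  | add p q hp hq => rw [map_add]; exact ha _ _ hp hq
  | C_mul_T n a =>
    have := hs a _ (h n)
    convert this using 1
    rw [← LaurentPolynomial.smul_eq_C_mul]; rfl

lemma tt_comm (d) (r : ℚ) (x : LQuot ℚ (T d + 1)) : tt • (r • x) = r • (tt • x) :=
  smul_comm _ _ _

lemma Lfun_tt (d c hc) (c' hc') (h : ∀ n, c (n+1) = c' n) (x) :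
    Lfun d c hc (tt • x) = Lfun d c' hc' x := by
  induction x using ek_ind with
  | h n => rw [tt_ek, Lfun_ek, Lfun_ek, h]
  | ha x y hx hy => rw [smul_add, map_add, map_add, hx, hy]
  | hs r x hx => rw [tt_comm, LinearMap.map_smul, LinearMap.map_smul, hx]

lemma t4 (x : LQuot ℚ (T 4 + 1)) : tt • tt • tt • tt • x = - x := by
  induction x using ek_ind with
  | h n => rw [tt_ek, tt_ek, tt_ek, tt_ek, ← ek_add]; congr 1; ring
  | ha x y hx hy => simp only [smul_add, hx, hy, neg_add]
  | hs r x hx => simp only [tt_comm, hx, smul_neg]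

lemma t2 (x : LQuot ℚ (T 2 + 1)) : tt • tt • x = - x := by
  induction x using ek_ind with
  | h n => rw [tt_ek, tt_ek, ← ek_add]; congr 1; ring
  | ha x y hx hy => simp only [smul_add, hx, hy, neg_add]
  | hs r x hx => simp only [tt_comm, hx, smul_neg]

lemma ek_mul (d : ℤ) (n q : ℤ) : ek d (n + q * d) = ek d n ∨ ek d (n + q * d) = - ek d n := by
  induction q using Int.induction_on with
  | zero => left; simp
  | succ i ih =>
    have := ek_add d (n + i * d)
    rw [show n + (i+1) * d = n + i*d + d by ring, this]
    rcases ih with h | h <;> simp [h]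
  | pred i ih =>
    have := ek_add d (n + (-i-1) * d)
    rw [show n + (-(i:ℤ)-1) * d + d = n + (-i)*d by ring] at this
    rw [this] at ih
    rcases ih with h | h
    · right; rw [← h, neg_neg]
    · left; exact neg_injective h

/-- induction with few generators -/
lemma ek_ind' {d : ℤ} (hd : 0 < d) {P : LQuot ℚ (T d + 1) → Prop}
    (h : ∀ n, 0 ≤ n → n < d → P (ek d n))
    (ha : ∀ x y, P x → P y → P (x+y)) (hs : ∀ (r : ℚ) x, P x → P (r • x)) (x) : P x := by
  refine ek_ind (fun n => ?_) ha hs x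
  have h1 := h (n % d) (Int.emod_nonneg _ hd.ne') (Int.emod_lt_of_pos _ hd)
  have h2 := ek_mul d (n % d) (n / d)
  rw [Int.emod_add_ediv_mul] at h2
  rcases h2 with h2 | h2 <;> rw [h2]
  · exact h1
  · have := hs (-1) _ h1
    rwa [neg_one_smul] at this

abbrev EE := LQuot ℚ (T 4 + 1)
abbrev FF := LQuot ℚ (T 2 + 1)

def iE : EE → Amod := fun x => (x, 0)
def iF : FF → Amod := fun x => (0, x)

lemma iE_add (x y) : iE (x+y) = iE x + iE y := by simp [iE]
lemma iF_add (x y) : iF (x+y) = iF x + iF y := by simp [iF]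
lemma iE_smul (r : ℚ) (x) : iE (r • x) = r • iE x := by simp [iE]
lemma iF_smul (r : ℚ) (x) : iF (r • x) = r • iF x := by simp [iF]
lemma iE_neg (x) : iE (-x) = - iE x := by simp [iE]
lemma iF_neg (x) : iF (-x) = - iF x := by simp [iF]
lemma iE_tt (x) : tt • iE x = iE (tt • x) := by simp [iE]
lemma iF_tt (x) : tt • iF x = iF (tt • x) := by simp [iF]
lemma dec (a : Amod) : a = iE a.1 + iF a.2 := by simp [iE, iF]

lemma upper {N : Type*} [AddCommGroup N] [Module ℚ N] (b : Amod → Amod → Amod → N)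
    (add1 : ∀ x y z w, b (x+y) z w = b x z w + b y z w)
    (smul1 : ∀ (r : ℚ) x z w, b (r • x) z w = r • b x z w)
    (s12 : ∀ x y z, b x y z = - b y x z)
    (s23 : ∀ x y z, b x y z = - b x z y)
    (ht : ∀ x y z, b (tt • x) (tt • y) (tt • z) = b x y z)
    (hu : b (iE (ek 4 0)) (iE (ek 4 1)) (iF (ek 2 0)) = 0)
    (hv : b (iE (ek 4 1)) (iE (ek 4 2)) (iF (ek 2 0)) = 0) (x y z) : b x y z = 0 := by
  have add2 : ∀ x y z w, b x (y+z) w = b x y w + b x z w := fun x y z w => by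
    rw [s12, add1, s12 x y, s12 x z]; abel
  have add3 : ∀ x y z w, b x y (z+w) = b x y z + b x y w := fun x y z w => by
    rw [s23, add2, s23 x y z, s23 x y w]; abel
  have smul2 : ∀ (r : ℚ) x y w, b x (r • y) w = r • b x y w := fun r x y w => by
    rw [s12, smul1, s12 x y, smul_neg]
  have smul3 : ∀ (r : ℚ) x y w, b x y (r • w) = r • b x y w := fun r x y w => by
    rw [s23, smul2, s23 x y, smul_neg]
  have neg1 : ∀ x y z, b (-x) y z = - b x y z := fun x y z => by
    have := smul1 (-1) x y z
    rwa [neg_one_smul, neg_one_smul] at this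
  have neg2 : ∀ x y z, b x (-y) z = - b x y z := fun x y z => by
    have := smul2 (-1) x y z
    rwa [neg_one_smul, neg_one_smul] at this
  have neg3 : ∀ x y z, b x y (-z) = - b x y z := fun x y z => by
    have := smul3 (-1) x y z
    rwa [neg_one_smul, neg_one_smul] at this
  have self0 : ∀ w : N, w = - w → w = 0 := fun w h => by
    have : (2:ℚ) • w = 0 := by rw [two_smul]; nth_rw 1 [h]; simp
    simpa using this
  have hEEE : ∀ x y z, b (iE x) (iE y) (iE z) = 0 := fun x y z => by
    apply self0
    conv_lhs => rw [← ht, ← ht, ← ht, ← ht]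
    simp only [iE_tt, t4, iE_neg, neg1, neg2, neg3, neg_neg]
  have hFFF : ∀ x y z, b (iF x) (iF y) (iF z) = 0 := fun x y z => by
    apply self0
    conv_lhs => rw [← ht, ← ht]
    simp only [iF_tt, t2, iF_neg, neg1, neg2, neg3, neg_neg]
  have hEFF : ∀ x y z, b (iE x) (iF y) (iF z) = 0 := fun x y z => by
    apply self0
    conv_lhs => rw [← ht, ← ht, ← ht, ← ht]
    simp only [iE_tt, iF_tt, t4, t2, iE_neg, iF_neg, smul_neg, neg1, neg2, neg3, neg_neg]
  have hsh : ∀ x y, b (iE x) (iE y) (iF (ek 2 0)) =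
      - b (iE (tt • tt • x)) (iE (tt • tt • y)) (iF (ek 2 0)) := fun x y => by
    conv_lhs => rw [← ht, ← ht]
    simp only [iE_tt, iF_tt, t2, iF_neg, neg3]
  have e4 : ek 4 4 = - ek 4 0 := by simpa using ek_add 4 0
  have e5 : ek 4 5 = - ek 4 1 := by simpa using ek_add 4 1
  have key : ∀ x y, b (iE x) (iE y) (iF (ek 2 0)) = 0 := by
    have diag : ∀ x, b (iE x) (iE x) (iF (ek 2 0)) = 0 := fun x => self0 _ (s12 _ _ _)
    have h02 : b (iE (ek 4 0)) (iE (ek 4 2)) (iF (ek 2 0)) = 0 := by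
      apply self0
      conv_lhs => rw [hsh, s12]
      simp [tt_ek, e4, iE_neg, neg1]
    have h13 : b (iE (ek 4 1)) (iE (ek 4 3)) (iF (ek 2 0)) = 0 := by
      apply self0
      conv_lhs => rw [hsh, s12]
      simp [tt_ek, e5, iE_neg, neg1]
    have h23 : b (iE (ek 4 2)) (iE (ek 4 3)) (iF (ek 2 0)) = 0 := by
      rw [hsh]
      simp [tt_ek, e4, e5, iE_neg, neg1, neg2, hu]
    have h03 : b (iE (ek 4 0)) (iE (ek 4 3)) (iF (ek 2 0)) = 0 := by
      rw [hsh, s12]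
      simp [tt_ek, e5, iE_neg, neg1, hv]
    intro x y
    induction x using ek_ind' (d := 4) (by norm_num) with
    | ha x x' hx hx' => rw [iE_add, add1, hx, hx', add_zero]
    | hs r x hx => rw [iE_smul, smul1, hx, smul_zero]
    | h n h0 h1 =>
    induction y using ek_ind' (d := 4) (by norm_num) with
    | ha x x' hx hx' => rw [iE_add, add2, hx, hx', add_zero]
    | hs r x hx => rw [iE_smul, smul2, hx, smul_zero]
    | h m h2 h3 =>
      interval_cases n <;> interval_cases m <;>
        first
        | exact diag _
        | assumption
        | (rw [s12, neg_eq_zero]; assumption)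
  have hEEF : ∀ x y z, b (iE x) (iE y) (iF z) = 0 := fun x y z => by
    induction z using ek_ind' (d := 2) (by norm_num) with
    | ha z z' hx hx' => rw [iF_add, add3, hx, hx', add_zero]
    | hs r x hx => rw [iF_smul, smul3, hx, smul_zero]
    | h n h0 h1 =>
      interval_cases n
      · exact key _ _
      · rw [← ht, iF_tt, tt_ek, show (1:ℤ)+1 = 0 + 2 by norm_num, ek_add, iF_neg, neg3, iE_tt,
          iE_tt, key, neg_zero]
  rw [dec x, dec y, dec z]
  simp only [add1, add2, add3]
  rw [hEEE, hFFF, hEFF, hEEF, s23 (iE _) (iF _) (iE _), hEEF, s12 (iF _) (iE _) (iE _),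
    s23 (iE _) (iF _) (iE _), hEEF, s12 (iF _) (iE _) (iF _), hEFF, s23 (iF _) (iF _) (iE _),
    s12 (iF _) (iE _) (iF _), hEFF]
  simp

def c4 (k n : ℤ) : ℚ := if (n - k) % 8 = 0 then 1 else if (n - k) % 8 = 4 then -1 else 0
def c2 (k n : ℤ) : ℚ := if (n - k) % 4 = 0 then 1 else if (n - k) % 4 = 2 then -1 else 0

lemma c4_anti (k n) : c4 k (n+4) = - c4 k n := by
  unfold c4; split_ifs <;> first | omega | simp
lemma c2_anti (k n) : c2 k (n+2) = - c2 k n := by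
  unfold c2; split_ifs <;> first | omega | simp

def X (k : ℤ) : Amod →ₗ[ℚ] ℚ := Lfun 4 (c4 k) (c4_anti k) ∘ₗ LinearMap.fst ℚ EE FF
def Y (k : ℤ) : Amod →ₗ[ℚ] ℚ := Lfun 2 (c2 k) (c2_anti k) ∘ₗ LinearMap.snd ℚ EE FF

lemma X_tt (k x) : X (k+1) (tt • x) = X k x := by
  exact Lfun_tt 4 (c4 (k+1)) (c4_anti _) (c4 k) (c4_anti _) (fun n => by simp [c4]) x.1
lemma Y_tt (k x) : Y (k+1) (tt • x) = Y k x := by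
  exact Lfun_tt 2 (c2 (k+1)) (c2_anti _) (c2 k) (c2_anti _) (fun n => by simp [c2]) x.2
lemma X_tt0 (x) : X 0 (tt • x) = - X 3 x := by
  rw [← X_tt 3 x]
  have : ∀ z, Lfun 4 (c4 0) (c4_anti 0) z = - Lfun 4 (c4 (3+1)) (c4_anti (3+1)) z := fun z => by
    induction z using ek_ind with
    | h n => rw [Lfun_ek, Lfun_ek]; unfold c4; split_ifs <;> first | omega | simp
    | ha x y hx hy => rw [map_add, map_add, hx, hy, neg_add]
    | hs r x hx => rw [map_smul, map_smul, hx, smul_neg]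
  exact this (tt • x).1
lemma Y_tt0 (x) : Y 0 (tt • x) = - Y 1 x := by
  rw [← Y_tt 1 x]
  have : ∀ z, Lfun 2 (c2 0) (c2_anti 0) z = - Lfun 2 (c2 (1+1)) (c2_anti (1+1)) z := fun z => by
    induction z using ek_ind with
    | h n => rw [Lfun_ek, Lfun_ek]; unfold c2; split_ifs <;> first | omega | simp
    | ha x y hx hy => rw [map_add, map_add, hx, hy, neg_add]
    | hs r x hx => rw [map_smul, map_smul, hx, smul_neg]
  exact this (tt • x).2

lemma X_E (k n) : X k (iE (ek 4 n)) = c4 k n := Lfun_ek 4 (c4 k) (c4_anti k) n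
lemma Y_F (k n) : Y k (iF (ek 2 n)) = c2 k n := Lfun_ek 2 (c2 k) (c2_anti k) n
lemma X_F (k x) : X k (iF x) = 0 := by simp [X, iF]
lemma Y_E (k x) : Y k (iE x) = 0 := by simp [Y, iE]

def D (i j k : ℤ) : Amod [⋀^Fin 3]→ₗ[ℚ] ℚ :=
  (Matrix.detRowAlternating (R := ℚ) (n := Fin 3)).compLinearMap
    (LinearMap.pi ![X i, X j, Y k])

lemma D_apply (i j k : ℤ) (a b c : Amod) : D i j k ![a, b, c] =
    X i a * X j b * Y k c - X i a * Y k b * X j c - X j a * X i b * Y k c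
     + X j a * Y k b * X i c + Y k a * X i b * X j c - Y k a * X j b * X i c := by
  unfold D
  rw [AlternatingMap.compLinearMap_apply]
  change Matrix.det (Matrix.of fun p => (LinearMap.pi ![X i, X j, Y k]) (![a, b, c] p)) = _
  rw [Matrix.det_fin_three]
  simp

def φ1 : Amod [⋀^Fin 3]→ₗ[ℚ] ℚ := D 0 1 0 - D 2 3 0 + D 1 2 1 - D 0 3 1
def φ2 : Amod [⋀^Fin 3]→ₗ[ℚ] ℚ := D 1 2 0 - D 0 3 0 - D 0 1 1 + D 2 3 1

lemma φ_tt (a b c : Amod) : φ1 ![tt • a, tt • b, tt • c] = φ1 ![a, b, c] ∧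
    φ2 ![tt • a, tt • b, tt • c] = φ2 ![a, b, c] := by
  have h1 : ∀ x, X 1 (tt • x) = X 0 x := X_tt 0
  have h2 : ∀ x, X 2 (tt • x) = X 1 x := X_tt 1
  have h3 : ∀ x, X 3 (tt • x) = X 2 x := X_tt 2
  have h4 : ∀ x, Y 1 (tt • x) = Y 0 x := Y_tt 0
  simp only [φ1, φ2, AlternatingMap.add_apply, AlternatingMap.sub_apply, D_apply, h1, h2, h3, h4,
    X_tt0, Y_tt0]
  constructor <;> ring

def Φ (φ : Amod [⋀^Fin 3]→ₗ[ℚ] ℚ) (h : ∀ a b c : Amod, φ ![tt • a, tt • b, tt • c] = φ ![a, b, c]) :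
    Hcal ℚ Amod →ₗ[ℚ] ℚ :=
  Submodule.liftQ _ (exteriorPower.alternatingMapLinearEquiv φ) (by
    unfold wedgeHol
    rw [Submodule.span_le]
    rintro _ ⟨a, b, c, rfl⟩
    rw [SetLike.mem_coe, LinearMap.mem_ker, map_sub, sub_eq_zero]
    have : ∀ a b c : Amod, exteriorPower.alternatingMapLinearEquiv φ (wedge3 ℚ Amod a b c)
      = φ ![a, b, c] := fun a b c => exteriorPower.alternatingMapLinearEquiv_apply_ιMulti φ _
    rw [this, this]
    exact (h a b c).symm)

def W (a b c : Amod) : Hcal ℚ Amod := (wedgeHol ℚ Amod).mkQ (wedge3 ℚ Amod a b c)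

lemma Φ_W (φ h a b c) : Φ φ h (W a b c) = φ ![a, b, c] :=
  exteriorPower.alternatingMapLinearEquiv_apply_ιMulti φ _

def UV : Fin 2 → Hcal ℚ Amod := ![W (iE (ek 4 0)) (iE (ek 4 1)) (iF (ek 2 0)),
  W (iE (ek 4 1)) (iE (ek 4 2)) (iF (ek 2 0))]

lemma UV_indep : LinearIndependent ℚ UV := by
  rw [Fintype.linearIndependent_iff]
  intro g hg
  rw [Fin.sum_univ_two] at hg
  have h1 := congrArg (Φ φ1 (fun a b c => (φ_tt a b c).1)) hg
  have h2 := congrArg (Φ φ2 (fun a b c => (φ_tt a b c).2)) hg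
  simp [UV, Φ_W, φ1, φ2, D_apply, X_E, X_F, Y_E, Y_F, c4, c2] at h1 h2
  intro i
  fin_cases i
  · exact h1
  · exact h2

/-- the alternating map -/
def Wm : Amod [⋀^Fin 3]→ₗ[ℚ] Hcal ℚ Amod :=
  (wedgeHol ℚ Amod).mkQ.compAlternatingMap (exteriorPower.ιMulti ℚ 3)

lemma Wm_apply (a b c) : Wm ![a, b, c] = W a b c := rfl

lemma W_tt (a b c) : W (tt • a) (tt • b) (tt • c) = W a b c := by
  symm
  unfold W
  rw [← sub_eq_zero, ← map_sub, Submodule.mkQ_apply, Submodule.Quotient.mk_eq_zero]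
  exact Submodule.subset_span ⟨a, b, c, rfl⟩

lemma UV_span : ⊤ ≤ Submodule.span ℚ (Set.range UV) := by
  set S := Submodule.span ℚ (Set.range UV) with hS
  have main : ∀ a b c, S.mkQ (W a b c) = 0 := by
    refine upper (fun a b c => S.mkQ (W a b c)) ?_ ?_ ?_ ?_ ?_ ?_ ?_
    · intro x y z w
      simp only [← Wm_apply, ← map_add]
      congr 1
      have := Wm.map_update_add ![x, z, w] 0 x y
      have hh : ∀ q, Function.update ![x, z, w] 0 q = ![q, z, w] := fun q => by ext i : 1; fin_cases i <;> rfl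
      rwa [hh, hh, hh] at this
    · intro r x z w
      simp only [← Wm_apply, ← map_smul]
      congr 1
      have := Wm.map_update_smul ![x, z, w] 0 r x
      have hh : ∀ q, Function.update ![x, z, w] 0 q = ![q, z, w] := fun q => by ext i : 1; fin_cases i <;> rfl
      rwa [hh, hh] at this
    · intro x y z
      simp only [← Wm_apply, ← map_neg]
      congr 1
      rw [← Wm.map_swap ![y, x, z] (show (0 : Fin 3) ≠ 1 by decide)]
      congr 1
      ext i : 1
      fin_cases i <;> rfl
    · intro x y z
      simp only [← Wm_apply, ← map_neg]
      congr 1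
      rw [← Wm.map_swap ![x, z, y] (show (1 : Fin 3) ≠ 2 by decide)]
      congr 1
      ext i : 1
      fin_cases i <;> rfl
    · intro x y z
      simp only [W_tt]
    · rw [Submodule.mkQ_apply, Submodule.Quotient.mk_eq_zero]
      exact Submodule.subset_span ⟨0, rfl⟩
    · rw [Submodule.mkQ_apply, Submodule.Quotient.mk_eq_zero]
      exact Submodule.subset_span ⟨1, rfl⟩
  have h2 : S.mkQ ∘ₗ (wedgeHol ℚ Amod).mkQ = 0 := by
    apply exteriorPower.linearMap_ext
    ext v
    have : v = ![v 0, v 1, v 2] := by ext i : 1; fin_cases i <;> rfl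
    rw [this]
    exact main _ _ _
  intro w _
  obtain ⟨w, rfl⟩ := Submodule.mkQ_surjective _ w
  rw [← Submodule.Quotient.mk_eq_zero]
  exact LinearMap.congr_fun h2 w

theorem stmt15 : Module.finrank ℚ (Hcal ℚ Amod) = 2 := by
  rw [Module.finrank_eq_card_basis (Module.Basis.mk UV_indep UV_span)]
  simp
end
end
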